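/- Let σ₄ be the morphism on ternary words defined by σ₄(0) = 0012, σ₄(1) = 112, σ₄(2) = 022. For every n ≥ 0, the word σ₄ⁿ(0) avoids abelian 3-powers cyclically. Consequently there exist arbitrarily long ternary words avoiding abelian 3-powers cyclically, i.e. A_∞(3) ≤ 3. -/

import Mathlib

/-- `u` is an abelian `N`-power of period `m`: a concatenation of `N` nonempty
pairwise abelian-equivalent words of common length `m`. -/
def IsAbelianPower {α : Type*} (N m : ℕ) (u : List α) : Prop :=
  0 < m ∧ ∃ f : Fin N → List α,
    u = (List.ofFn f).flatten ∧ (∀ i, (f i).length = m) ∧ ∀ i j, List.Perm (f i) (f j)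

/-- `u` occurs in the infinite word `w^ω`, i.e. `u` is a factor of `w^k` for some `k`. -/
def OccursCyc {α : Type*} (w u : List α) : Prop :=
  ∃ k : ℕ, u <:+: (List.replicate k w).flatten

/-- `w` avoids abelian `N`-powers cyclically: every abelian `N`-power of period `m`
occurring in `w^ω` satisfies `m ≥ |w|`. -/
def AvoidsAbelianCyc {α : Type*} (N : ℕ) (w : List α) : Prop :=
  ∀ m u, IsAbelianPower N m u → OccursCyc w u → w.length ≤ m

/-- Application of a morphism given by its images on letters. -/
def applyMorphism {α β : Type*} (σ : α → List β) (w : List α) : List β :=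
  (w.map σ).flatten

/-- Dekking's morphism σ₄ : 0 ↦ 0012, 1 ↦ 112, 2 ↦ 022. -/
def sigma4 : Fin 3 → List (Fin 3) := fun a =>
  if a = 0 then [0, 0, 1, 2] else if a = 1 then [1, 1, 2] else [0, 2, 2]

def Cut (x p : List (Fin 3)) : Prop :=
  ∃ y, y <+: x ∧ ∃ e0 e1 e2 d0 d1 d2 : ℕ,
    (p.count 0 + d0 = 2 * y.count 0 + y.count 2 + e0 ∧
     p.count 1 + d1 = y.count 0 + 2 * y.count 1 + e1 ∧
     p.count 2 + d2 = y.count 0 + y.count 1 + 2 * y.count 2 + e2) ∧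
    ((e0 = 0 ∧ e1 = 0 ∧ e2 = 0 ∧ d0 = 0 ∧ d1 = 0 ∧ d2 = 0) ∨
     (e0 = 1 ∧ e1 = 0 ∧ e2 = 0 ∧ d0 = 0 ∧ d1 = 0 ∧ d2 = 0) ∨
     (e0 = 0 ∧ e1 = 0 ∧ e2 = 0 ∧ d0 = 0 ∧ d1 = 1 ∧ d2 = 1) ∨
     (e0 = 0 ∧ e1 = 0 ∧ e2 = 0 ∧ d0 = 0 ∧ d1 = 0 ∧ d2 = 1))

lemma count_sigma4 (a : Fin 3) :
    (sigma4 a).count 0 = 2 * [a].count 0 + [a].count 2 ∧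
    (sigma4 a).count 1 = [a].count 0 + 2 * [a].count 1 ∧
    (sigma4 a).count 2 = [a].count 0 + [a].count 1 + 2 * [a].count 2 := by
  revert a; decide

lemma cut_letter (a : Fin 3) (x p : List (Fin 3)) (hp : p <+: sigma4 a) : Cut (a :: x) p := by
  have hm : p ∈ (sigma4 a).inits := (List.mem_inits _ _).2 hp
  have hA : [a] <+: a :: x := ⟨x, rfl⟩
  have hN : [] <+: a :: x := ⟨a :: x, rfl⟩
  fin_cases a <;> simp [sigma4] at hm <;> rcases hm with rfl | hm
  all_goals try exact ⟨[], hN, 0, 0, 0, 0, 0, 0, by decide, by decide⟩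
  all_goals
    rcases hm with rfl | rfl | rfl | rfl <;>
    first
    | exact ⟨[], hN, 1, 0, 0, 0, 0, 0, by decide, by decide⟩
    | exact ⟨_, hA, 0, 0, 0, 0, 0, 0, by decide, by decide⟩
    | exact ⟨_, hA, 0, 0, 0, 0, 1, 1, by decide, by decide⟩
    | exact ⟨_, hA, 0, 0, 0, 0, 0, 1, by decide, by decide⟩

lemma cut_of_prefix (x p : List (Fin 3)) (hp : p <+: applyMorphism sigma4 x) : Cut x p := by
  induction x generalizing p with
  | nil =>
    have : p = [] := by simpa [applyMorphism] using hp
    subst this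
    exact ⟨[], ⟨[], rfl⟩, 0, 0, 0, 0, 0, 0, by decide, by decide⟩
  | cons a x ih =>
    obtain ⟨s, hs⟩ := hp
    have hc : applyMorphism sigma4 (a :: x) = sigma4 a ++ applyMorphism sigma4 x := by
      simp [applyMorphism]
    rw [hc, List.append_eq_append_iff] at hs
    rcases hs with ⟨c, hc1, hc2⟩ | ⟨c, hc1, hc2⟩
    · exact cut_letter a x p ⟨c, hc1.symm⟩
    · obtain ⟨y, hy, e0, e1, e2, d0, d1, d2, h, h'⟩ := ih c ⟨s, hc2.symm⟩
      refine ⟨a :: y, (List.prefix_cons_inj a).2 hy, e0, e1, e2, d0, d1, d2, ?_, h'⟩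
      have h3 := count_sigma4 a
      have e : ∀ b, (a :: y).count b = [a].count b + y.count b := fun b => by
        rw [← List.count_append]; rfl
      subst hc1
      simp only [List.count_append, e]
      omega

lemma length_eq_counts (x : List (Fin 3)) : x.length = x.count 0 + x.count 1 + x.count 2 := by
  induction x with
  | nil => rfl
  | cons a x ih =>
    have e : ∀ b, (a :: x).count b = [a].count b + x.count b := fun b => by
      rw [← List.count_append]; rfl
    have : [a].count 0 + [a].count 1 + [a].count 2 = 1 := by clear e; revert a; decide
    simp only [e, List.length_cons]
    omega

lemma counts_apply (x : List (Fin 3)) :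
    (applyMorphism sigma4 x).count 0 = 2 * x.count 0 + x.count 2 ∧
    (applyMorphism sigma4 x).count 1 = x.count 0 + 2 * x.count 1 ∧
    (applyMorphism sigma4 x).count 2 = x.count 0 + x.count 1 + 2 * x.count 2 := by
  induction x with
  | nil => decide
  | cons a x ih =>
    have hc : applyMorphism sigma4 (a :: x) = sigma4 a ++ applyMorphism sigma4 x := by
      simp [applyMorphism]
    have h3 := count_sigma4 a
    have e : ∀ b, (a :: x).count b = [a].count b + x.count b := fun b => by
      rw [← List.count_append]; rfl
    rw [hc]
    simp only [List.count_append, e]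
    omega

lemma apply_replicate (k : ℕ) (w : List (Fin 3)) :
    (List.replicate k (applyMorphism sigma4 w)).flatten
      = applyMorphism sigma4 (List.replicate k w).flatten := by
  induction k with
  | zero => rfl
  | succ k ih =>
    rw [List.replicate_succ, List.flatten_cons, ih, List.replicate_succ, List.flatten_cons]
    simp [applyMorphism]

lemma count_le_of_occurs (w v : List (Fin 3)) (hv : OccursCyc w v) (hl : w.length ≤ v.length)
    (b : Fin 3) : w.count b ≤ v.count b := by
  obtain ⟨k, p, s, h⟩ := hv
  induction k generalizing p with
  | zero =>
    have : v = [] := by simp at h; exact h.2.1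
    subst this
    have : w = [] := by simpa using hl
    subst this; rfl
  | succ k ih =>
    rw [List.replicate_succ, List.flatten_cons, List.append_assoc,
      List.append_eq_append_iff] at h
    rcases h with ⟨t, h1, h2⟩ | ⟨t, h1, h2⟩
    · have hpre : t ++ p <+: v := by
        have hq : t ++ p <+: t ++ (List.replicate k w).flatten ∨ p = [] := by
          cases k with
          | zero =>
            right
            simp at h2
            have := congrArg List.length h1
            have h4 := congrArg List.length h2
            simp at this h4
            exact List.length_eq_zero_iff.1 (by omega)
          | succ k =>
            left
            rw [List.replicate_succ, List.flatten_cons, h1]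
            exact ⟨t ++ (List.replicate k (p ++ t)).flatten, by simp⟩
        have hq' : t ++ p <+: v ++ s := by
          rw [h2]
          rcases hq with hq | rfl
          · exact hq
          · simp
        refine List.prefix_of_prefix_length_le hq' ⟨s, rfl⟩ ?_
        rw [h1] at hl
        simp at hl ⊢
        omega
      obtain ⟨r, hr⟩ := hpre
      rw [← hr, h1]
      simp only [List.count_append]
      omega
    · exact ih t (by rw [List.append_assoc]; exact h2.symm)

def CutT (t P0 P1 P2 Y0 Y1 Y2 : ℕ) : Prop :=
  (t = 0 ∧ P0 = 2 * Y0 + Y2 ∧ P1 = Y0 + 2 * Y1 ∧ P2 = Y0 + Y1 + 2 * Y2) ∨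
  (t = 1 ∧ P0 = 2 * Y0 + Y2 + 1 ∧ P1 = Y0 + 2 * Y1 ∧ P2 = Y0 + Y1 + 2 * Y2) ∨
  (t = 2 ∧ P0 = 2 * Y0 + Y2 ∧ P1 + 1 = Y0 + 2 * Y1 ∧ P2 + 1 = Y0 + Y1 + 2 * Y2) ∨
  (t = 4 ∧ P0 = 2 * Y0 + Y2 ∧ P1 = Y0 + 2 * Y1 ∧ P2 + 1 = Y0 + Y1 + 2 * Y2)

lemma CutT.mod {t P0 P1 P2 Y0 Y1 Y2 : ℕ} (h : CutT t P0 P1 P2 Y0 Y1 Y2) :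
    (P0 + 2 * P1 + 3 * P2) % 7 = t := by
  rcases h with h | h | h | h <;> omega

lemma CutT.vals {t P0 P1 P2 Y0 Y1 Y2 : ℕ} (h : CutT t P0 P1 P2 Y0 Y1 Y2) :
    t = 0 ∨ t = 1 ∨ t = 2 ∨ t = 4 := by
  rcases h with h | h | h | h <;> omega

lemma Cut.exT {x p : List (Fin 3)} (h : Cut x p) : ∃ y, y <+: x ∧ ∃ t,
    CutT t (p.count 0) (p.count 1) (p.count 2) (y.count 0) (y.count 1) (y.count 2) := by
  obtain ⟨y, hy, e0, e1, e2, d0, d1, d2, ⟨h1, h2, h3⟩, h'⟩ := h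
  refine ⟨y, hy, ?_⟩
  rcases h' with ⟨rfl, rfl, rfl, rfl, rfl, rfl⟩ | ⟨rfl, rfl, rfl, rfl, rfl, rfl⟩ |
    ⟨rfl, rfl, rfl, rfl, rfl, rfl⟩ | ⟨rfl, rfl, rfl, rfl, rfl, rfl⟩
  · exact ⟨0, Or.inl ⟨rfl, h1, h2, h3⟩⟩
  · exact ⟨1, Or.inr (Or.inl ⟨rfl, h1, h2, h3⟩)⟩
  · exact ⟨2, Or.inr (Or.inr (Or.inl ⟨rfl, h1, h2, h3⟩))⟩
  · exact ⟨4, Or.inr (Or.inr (Or.inr ⟨rfl, h1, h2, h3⟩))⟩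

lemma ap_const (a d t0 t1 t2 t3 : ℕ)
    (v0 : t0 = 0 ∨ t0 = 1 ∨ t0 = 2 ∨ t0 = 4) (v1 : t1 = 0 ∨ t1 = 1 ∨ t1 = 2 ∨ t1 = 4)
    (v2 : t2 = 0 ∨ t2 = 1 ∨ t2 = 2 ∨ t2 = 4) (v3 : t3 = 0 ∨ t3 = 1 ∨ t3 = 2 ∨ t3 = 4)
    (h0 : a % 7 = t0) (h1 : (a + d) % 7 = t1) (h2 : (a + 2 * d) % 7 = t2)
    (h3 : (a + 3 * d) % 7 = t3) : t1 = t0 ∧ t2 = t0 ∧ t3 = t0 := by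
  have g1 : (t0 + d % 7) % 7 = t1 := by omega
  have g2 : (t0 + 2 * (d % 7)) % 7 = t2 := by omega
  have g3 : (t0 + 3 * (d % 7)) % 7 = t3 := by omega
  have hd : d % 7 < 7 := Nat.mod_lt _ (by norm_num)
  clear h0 h1 h2 h3
  generalize d % 7 = e at *
  subst g1 g2 g3
  rcases v0 with rfl | rfl | rfl | rfl <;> interval_cases e <;> simp_all

lemma CutT.diff {t P0 P1 P2 Y0 Y1 Y2 U0 U1 U2 Z0 Z1 Z2 : ℕ} (h : CutT t P0 P1 P2 Y0 Y1 Y2)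
    (h' : CutT t (P0 + U0) (P1 + U1) (P2 + U2) Z0 Z1 Z2) :
    2 * Z0 + Z2 = 2 * Y0 + Y2 + U0 ∧ Z0 + 2 * Z1 = Y0 + 2 * Y1 + U1 ∧
    Z0 + Z1 + 2 * Z2 = Y0 + Y1 + 2 * Y2 + U2 := by
  rcases h with h | h | h | h <;> rcases h' with h' | h' | h' | h' <;> omega

lemma prefix_split {x y z : List (Fin 3)} (hy : y <+: x) (hz : z <+: x)
    (h : y.count 0 + 3 * y.length < z.count 0 + 3 * z.length) : ∃ v, z = y ++ v ∧ v ≠ [] := by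
  rcases List.prefix_or_prefix_of_prefix hy hz with ⟨v, hv⟩ | ⟨v, hv⟩
  · refine ⟨v, hv.symm, ?_⟩
    rintro rfl
    simp at hv
    subst hv
    omega
  · subst hv
    simp at h
    omega

lemma step (w : List (Fin 3)) (hw : AvoidsAbelianCyc 3 w) :
    AvoidsAbelianCyc 3 (applyMorphism sigma4 w) := by
  rintro m u ⟨hm, f, hu, hlen, hperm⟩ ⟨k, p, s, h⟩
  rw [apply_replicate] at h
  set x := (List.replicate k w).flatten with hx
  have hu' : u = f 0 ++ (f 1 ++ f 2) := by rw [hu]; simp [List.ofFn_succ]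
  obtain ⟨y0, hy0, t0, C0⟩ := (cut_of_prefix x p ⟨u ++ s, by rw [← h]; simp⟩).exT
  obtain ⟨y1, hy1, t1, C1⟩ := (cut_of_prefix x (p ++ f 0)
    ⟨f 1 ++ f 2 ++ s, by rw [← h, hu']; simp⟩).exT
  obtain ⟨y2, hy2, t2, C2⟩ := (cut_of_prefix x (p ++ f 0 ++ f 1)
    ⟨f 2 ++ s, by rw [← h, hu']; simp⟩).exT
  obtain ⟨y3, hy3, t3, C3⟩ := (cut_of_prefix x (p ++ f 0 ++ f 1 ++ f 2)
    ⟨s, by rw [← h, hu']; simp⟩).exT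
  have c1 : ∀ b, (f 1).count b = (f 0).count b := fun b => (hperm 1 0).count_eq b
  have c2 : ∀ b, (f 2).count b = (f 0).count b := fun b => (hperm 2 0).count_eq b
  simp only [List.count_append, c1, c2] at C1 C2 C3
  have hm' := length_eq_counts (f 0)
  rw [hlen] at hm'
  obtain ⟨e1, e2, e3⟩ := ap_const (p.count 0 + 2 * p.count 1 + 3 * p.count 2)
    ((f 0).count 0 + 2 * (f 0).count 1 + 3 * (f 0).count 2) t0 t1 t2 t3
    C0.vals C1.vals C2.vals C3.vals C0.mod
    (by rw [← C1.mod]; congr 1; ring) (by rw [← C2.mod]; congr 1; ring)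
    (by rw [← C3.mod]; congr 1; ring)
  subst e1 e2 e3
  have D1 := C0.diff C1
  have D2 := C1.diff C2
  have D3 := C2.diff C3
  clear C0 C1 C2 C3
  have L0 := length_eq_counts y0
  have L1 := length_eq_counts y1
  have L2 := length_eq_counts y2
  have L3 := length_eq_counts y3
  obtain ⟨v0, rfl, -⟩ := prefix_split hy0 hy1 (by omega)
  obtain ⟨v1, rfl, -⟩ := prefix_split hy1 hy2 (by omega)
  obtain ⟨v2, rfl, -⟩ := prefix_split hy2 hy3 (by omega)
  clear L0 L1 L2 L3
  simp only [List.count_append] at D1 D2 D3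
  have p1 : ∀ b, v1.count b = v0.count b := by
    intro b; fin_cases b <;> simp only [Fin.mk_one, Fin.zero_eta, Fin.reduceFinMk] <;> omega
  have p2 : ∀ b, v2.count b = v0.count b := by
    intro b; fin_cases b <;> simp only [Fin.mk_one, Fin.zero_eta, Fin.reduceFinMk] <;> omega
  have P1 : v1.Perm v0 := List.perm_iff_count.2 p1
  have P2 : v2.Perm v0 := List.perm_iff_count.2 p2
  have N0 := length_eq_counts v0
  have hle : w.length ≤ v0.length := by
    refine hw v0.length (v0 ++ (v1 ++ v2)) ⟨by omega, ![v0, v1, v2], by simp [List.ofFn_succ],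
      ?_, ?_⟩ ?_
    · intro i; fin_cases i
      · rfl
      · exact P1.length_eq
      · exact P2.length_eq
    · have key : ∀ i, (![v0, v1, v2] i).Perm v0 := by
        intro i; fin_cases i
        · exact List.Perm.refl _
        · exact P1
        · exact P2
      exact fun i j => (key i).trans (key j).symm
    · obtain ⟨r, hr⟩ := hy3
      exact ⟨k, y0, r, by rw [← hx, ← hr]; simp⟩
  have hocc : OccursCyc w v0 := by
    obtain ⟨r, hr⟩ := hy1
    exact ⟨k, y0, r, by rw [← hx, ← hr]⟩
  have q0 := count_le_of_occurs w v0 hocc hle 0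
  have q1 := count_le_of_occurs w v0 hocc hle 1
  have q2 := count_le_of_occurs w v0 hocc hle 2
  have g1 := counts_apply w
  have g2 := length_eq_counts (applyMorphism sigma4 w)
  omega

lemma iter_avoids (n : ℕ) : AvoidsAbelianCyc 3 ((applyMorphism sigma4)^[n] [(0 : Fin 3)]) := by
  induction n with
  | zero => exact fun m u hu _ => hu.1
  | succ n ih =>
    rw [Function.iterate_succ_apply']
    exact step _ ih

lemma iter_length (n : ℕ) : n + 1 ≤ ((applyMorphism sigma4)^[n] [(0 : Fin 3)]).length := by
  induction n with
  | zero => simp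
  | succ n ih =>
    rw [Function.iterate_succ_apply']
    set w := (applyMorphism sigma4)^[n] [(0 : Fin 3)]
    have h1 := counts_apply w
    have h2 := length_eq_counts w
    have h3 := length_eq_counts (applyMorphism sigma4 w)
    omega

theorem sigma4_iterates_avoid_abelian_3_powers_cyclically :
    (∀ n : ℕ, AvoidsAbelianCyc 3 ((applyMorphism sigma4)^[n] [(0 : Fin 3)])) ∧
    (∀ n : ℕ, ∃ w : List (Fin 3), n ≤ w.length ∧ AvoidsAbelianCyc 3 w) := by
  exact ⟨iter_avoids, fun n => ⟨_, (Nat.le_succ n).trans (iter_length n), iter_avoids n⟩⟩
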